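/- Let 0 < γ < β ≤ n, p = γ/β, and f ∈ L^p(H^γ_∞). Then there exists C = C(γ,β,n) > 0 such that for all t > 0, H^γ_∞({x : M_{H^β_∞} f(x) > t}) ≤ (C/t^p) ∫ |f|^p dH^γ_∞. -/

import Mathlib

open scoped ENNReal
open Metric Set MeasureTheory

noncomputable section

/-- `ℝⁿ` as Euclidean space. -/
abbrev Rn (n : ℕ) := EuclideanSpace ℝ (Fin n)

/-- The Choquet integral of a nonnegative function `g` with respect to a
(monotone) set function `C`: `∫ g dC := ∫_0^∞ C({g > t}) dt`. -/
noncomputable def choquet {X : Type*} (C : Set X → ℝ≥0∞) (g : X → ℝ≥0∞) : ℝ≥0∞ :=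
  ∫⁻ t in Ioi (0 : ℝ), C {x | ENNReal.ofReal t < g x}

/-- The Choquet integral of `g` restricted to a set `A`. -/
noncomputable def choquetOn {X : Type*} (C : Set X → ℝ≥0∞) (A : Set X) (g : X → ℝ≥0∞) : ℝ≥0∞ :=
  ∫⁻ t in Ioi (0 : ℝ), C {x | x ∈ A ∧ ENNReal.ofReal t < g x}

/-- The `L^∞(C)` norm: `inf {λ > 0 : C({|f| > λ}) = 0}` (formulated in `ℝ≥0∞`). -/
noncomputable def choquetEssSup {X : Type*} (C : Set X → ℝ≥0∞) (f : X → ℝ) : ℝ≥0∞ :=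
  sInf {l : ℝ≥0∞ | C {x | l < ENNReal.ofReal |f x|} = 0}

/-- `C`-quasicontinuity of a function `f`. -/
def QuasiCont {X : Type*} [TopologicalSpace X] (C : Set X → ℝ≥0∞) (f : X → ℝ) : Prop :=
  ∀ ε : ℝ≥0∞, 0 < ε → ∃ U : Set X, IsOpen U ∧ C U < ε ∧ ContinuousOn f Uᶜ

/-- Membership in the capacitary space `L^p(C)`: `C`-quasicontinuous with
finite `p`-th power Choquet integral. -/
def MemChoquetLp {X : Type*} [TopologicalSpace X] (C : Set X → ℝ≥0∞) (p : ℝ) (f : X → ℝ) : Prop :=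
  QuasiCont C f ∧ choquet C (fun x => ENNReal.ofReal |f x| ^ p) < ∞

/-- The normalization constant `ω_β = π^{β/2}/Γ(β/2+1)`. -/
noncomputable def omegaC (β : ℝ) : ℝ≥0∞ :=
  ENNReal.ofReal (Real.pi ^ (β / 2) / Real.Gamma (β / 2 + 1))

/-- The `β`-dimensional Hausdorff content `H^β_∞`, defined via countable
coverings by balls: `inf {∑ ω_β r_i^β : E ⊆ ⋃ B(x_i, r_i)}`. -/
noncomputable def hContent (n : ℕ) (β : ℝ) (E : Set (Rn n)) : ℝ≥0∞ :=
  ⨅ (c : ℕ → Rn n × ℝ) (_ : E ⊆ ⋃ i, ball (c i).1 (c i).2),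
    ∑' i, omegaC β * ENNReal.ofReal ((c i).2 ^ β)

/-- The centered Hausdorff content maximal function
`M_{H^β_∞} g(x) := sup_{r>0} (1/(ω_β r^β)) ∫_{B(x,r)} g dH^β_∞`. -/
noncomputable def maximalH (n : ℕ) (β : ℝ) (g : Rn n → ℝ≥0∞) (x : Rn n) : ℝ≥0∞ :=
  ⨆ (r : ℝ) (_ : 0 < r),
    (omegaC β * ENNReal.ofReal (r ^ β))⁻¹ * choquetOn (hContent n β) (ball x r) g

section DyadicSums

variable {b : ℝ}

lemma iUnion_Ioc_zpow_eq_Ioi (hb : 1 < b) : ⋃ k : ℤ, Ioc (b ^ k) (b ^ (k + 1)) = Ioi (0 : ℝ) := by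
  ext x
  simp only [mem_iUnion, mem_Ioi]
  constructor
  · rintro ⟨k, hk⟩
    exact (zpow_pos (by linarith) k).trans hk.1
  · intro hx
    exact exists_mem_Ioc_zpow hx hb

lemma lintegral_Ioi_eq_tsum_zpow (hb : 1 < b) (φ : ℝ → ℝ≥0∞) :
    ∫⁻ t in Ioi (0 : ℝ), φ t = ∑' k : ℤ, ∫⁻ t in Ioc (b ^ k) (b ^ (k + 1)), φ t := by
  rw [← iUnion_Ioc_zpow_eq_Ioi hb, lintegral_iUnion (fun _ => measurableSet_Ioc)]
  have hmono : Monotone fun k : ℤ => b ^ k := zpow_right_mono₀ hb.le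
  simpa using hmono.pairwise_disjoint_on_Ioc_succ

lemma volume_Ioc_zpow (hb : 1 < b) (k : ℤ) :
    volume (Ioc (b ^ k) (b ^ (k + 1))) = ENNReal.ofReal (b - 1) * ENNReal.ofReal (b ^ k) := by
  rw [Real.volume_Ioc, ← ENNReal.ofReal_mul (by linarith), zpow_add_one₀ (by linarith)]
  congr 1
  ring

lemma lintegral_Ioi_le_tsum_zpow (hb : 1 < b) {φ : ℝ → ℝ≥0∞} (hφ : Antitone φ) :
    ∫⁻ t in Ioi (0 : ℝ), φ t ≤
      ENNReal.ofReal (b - 1) * ∑' k : ℤ, ENNReal.ofReal (b ^ k) * φ (b ^ k) := by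
  rw [lintegral_Ioi_eq_tsum_zpow hb, ← ENNReal.tsum_mul_left]
  refine ENNReal.tsum_le_tsum fun k => ?_
  calc ∫⁻ t in Ioc (b ^ k) (b ^ (k + 1)), φ t
      ≤ ∫⁻ _ in Ioc (b ^ k) (b ^ (k + 1)), φ (b ^ k) :=
        setLIntegral_mono' measurableSet_Ioc fun x hx => hφ hx.1.le
    _ = ENNReal.ofReal (b - 1) * (ENNReal.ofReal (b ^ k) * φ (b ^ k)) := by
        rw [setLIntegral_const, volume_Ioc_zpow hb]
        ring

lemma tsum_zpow_le_lintegral_Ioi (hb : 1 < b) {φ : ℝ → ℝ≥0∞} (hφ : Antitone φ) :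
    ENNReal.ofReal (b - 1) * ∑' k : ℤ, ENNReal.ofReal (b ^ k) * φ (b ^ (k + 1)) ≤
      ∫⁻ t in Ioi (0 : ℝ), φ t := by
  rw [lintegral_Ioi_eq_tsum_zpow hb, ← ENNReal.tsum_mul_left]
  refine ENNReal.tsum_le_tsum fun k => ?_
  calc ENNReal.ofReal (b - 1) * (ENNReal.ofReal (b ^ k) * φ (b ^ (k + 1)))
      = ∫⁻ _ in Ioc (b ^ k) (b ^ (k + 1)), φ (b ^ (k + 1)) := by
        rw [setLIntegral_const, volume_Ioc_zpow hb]
        ring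
    _ ≤ ∫⁻ t in Ioc (b ^ k) (b ^ (k + 1)), φ t :=
        setLIntegral_mono' measurableSet_Ioc fun x hx => hφ hx.2

lemma tsum_zpow_mul_le_lintegral_Ioi (hb : 1 < b) {φ : ℝ → ℝ≥0∞} (hφ : Antitone φ) :
    ENNReal.ofReal (b - 1) * ∑' k : ℤ, ENNReal.ofReal (b ^ k) * φ (b ^ k) ≤
      ENNReal.ofReal b * ∫⁻ t in Ioi (0 : ℝ), φ t := by
  have hshift : ∑' k : ℤ, ENNReal.ofReal (b ^ k) * φ (b ^ k) =
      ENNReal.ofReal b * ∑' k : ℤ, ENNReal.ofReal (b ^ k) * φ (b ^ (k + 1)) := by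
    rw [← (Equiv.addRight (1 : ℤ)).tsum_eq, ← ENNReal.tsum_mul_left]
    refine tsum_congr fun k => ?_
    rw [Equiv.coe_addRight, zpow_add_one₀ (by linarith), mul_comm (b ^ k) b,
      ENNReal.ofReal_mul (by linarith), mul_assoc]
  rw [hshift, mul_left_comm]
  gcongr
  exact tsum_zpow_le_lintegral_Ioi hb hφ

lemma tsum_zpow_lt_le (hb : 1 < b) (m : ℤ) :
    ENNReal.ofReal (b - 1) * ∑' k : ℤ, (if k < m then ENNReal.ofReal (b ^ k) else 0) ≤
      ENNReal.ofReal (b ^ m) := by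
  have hanti : Antitone ((Iic (b ^ m)).indicator fun _ => (1 : ℝ≥0∞)) := by
    intro x y hxy
    by_cases hy : y ≤ b ^ m
    · rw [indicator_of_mem (show x ∈ Iic _ from hxy.trans hy), indicator_of_mem (by exact hy)]
    · rw [indicator_of_notMem (by exact hy)]
      exact zero_le
  calc _ = ENNReal.ofReal (b - 1) * ∑' k : ℤ, ENNReal.ofReal (b ^ k) *
          (Iic (b ^ m)).indicator (fun _ => (1 : ℝ≥0∞)) (b ^ (k + 1)) := by
        congr 1
        refine tsum_congr fun k => ?_
        have hk : b ^ (k + 1) ≤ b ^ m ↔ k < m := by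
          rw [zpow_le_zpow_iff_right₀ hb, Int.add_one_le_iff]
        by_cases h : k < m
        · rw [if_pos h, indicator_of_mem (by exact hk.2 h), mul_one]
        · rw [if_neg h, indicator_of_notMem (by exact fun h' => h (hk.1 h')), mul_zero]
    _ ≤ ∫⁻ t in Ioi (0 : ℝ), (Iic (b ^ m)).indicator (fun _ => (1 : ℝ≥0∞)) t :=
        tsum_zpow_le_lintegral_Ioi hb hanti
    _ = ENNReal.ofReal (b ^ m) := by
        rw [lintegral_indicator measurableSet_Iic, lintegral_one, Measure.restrict_apply_univ,
          Measure.restrict_apply measurableSet_Iic, inter_comm, Ioi_inter_Iic, Real.volume_Ioc,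
          sub_zero]

end DyadicSums

lemma ENNReal.tsum_rpow_le_rpow_tsum {ι : Type*} (a : ι → ℝ≥0∞) {q : ℝ} (hq : 1 ≤ q) :
    ∑' i, a i ^ q ≤ (∑' i, a i) ^ q := by
  have hsplit (x : ℝ≥0∞) : x ^ q = x * x ^ (q - 1) := by
    conv_lhs => rw [show q = 1 + (q - 1) by ring,
      ENNReal.rpow_add_of_nonneg _ _ zero_le_one (by linarith), ENNReal.rpow_one]
  calc ∑' i, a i ^ q = ∑' i, a i * a i ^ (q - 1) := tsum_congr fun i => hsplit _
    _ ≤ ∑' i, a i * (∑' j, a j) ^ (q - 1) := by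
        refine ENNReal.tsum_le_tsum fun i => ?_
        exact mul_le_mul_right
          (ENNReal.rpow_le_rpow (ENNReal.le_tsum i) (by linarith)) _
    _ = (∑' i, a i) ^ q := by rw [ENNReal.tsum_mul_right, ← hsplit]

lemma omegaC_ne_zero {β : ℝ} (hβ : 0 < β) : omegaC β ≠ 0 := by
  have := Real.Gamma_pos_of_pos (show 0 < β / 2 + 1 by linarith)
  have := Real.pi_pos
  rw [omegaC, ne_eq, ENNReal.ofReal_eq_zero, not_le]
  positivity

lemma omegaC_ne_top (β : ℝ) : omegaC β ≠ ∞ := ENNReal.ofReal_ne_top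

section Content

variable {n : ℕ} {β : ℝ}

lemma hContent_mono {E F : Set (Rn n)} (h : E ⊆ F) : hContent n β E ≤ hContent n β F :=
  le_iInf₂ fun c hc => iInf₂_le c (h.trans hc)

lemma hContent_le_tsum {ι : Type*} [Countable ι] (hβ : 0 < β) {E : Set (Rn n)}
    (x : ι → Rn n) (r : ι → ℝ) (hE : E ⊆ ⋃ i, ball (x i) (r i)) :
    hContent n β E ≤ omegaC β * ∑' i, ENNReal.ofReal (r i ^ β) := by
  obtain ⟨e, he⟩ := exists_injective_nat ι
  let c : ℕ → Rn n × ℝ := Function.extend e (fun i => (x i, r i)) 0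
  have hc (i : ι) : c (e i) = (x i, r i) := he.extend_apply _ _ i
  have hcost : (fun m => ENNReal.ofReal ((c m).2 ^ β)) =
      Function.extend e (fun i => ENNReal.ofReal (r i ^ β)) 0 := by
    ext m
    by_cases hm : ∃ i, e i = m
    · obtain ⟨i, rfl⟩ := hm
      rw [hc, he.extend_apply]
    · simp only [c, Function.extend_apply' _ _ _ hm, Pi.zero_apply, Prod.snd_zero,
        Real.zero_rpow hβ.ne', ENNReal.ofReal_zero]
  calc hContent n β E ≤ ∑' m, omegaC β * ENNReal.ofReal ((c m).2 ^ β) := by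
        refine iInf₂_le c (hE.trans (iUnion_subset fun i => ?_))
        have := subset_iUnion (fun m => ball (c m).1 (c m).2) (e i)
        simpa only [hc] using this
    _ = omegaC β * ∑' i, ENNReal.ofReal (r i ^ β) := by
        rw [ENNReal.tsum_mul_left, hcost, tsum_extend_zero he]

lemma exists_cover_of_hContent_lt (hβ : 0 < β) {E : Set (Rn n)} {a : ℝ≥0∞}
    (h : hContent n β E < a) :
    ∃ (x : ℕ → Rn n) (r : ℕ → ℝ), (∀ i, 0 ≤ r i) ∧ E ⊆ ⋃ i, ball (x i) (r i) ∧
      omegaC β * ∑' i, ENNReal.ofReal (r i ^ β) < a := by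
  simp only [hContent, iInf_lt_iff] at h
  obtain ⟨c, hc, hlt⟩ := h
  refine ⟨fun i => (c i).1, fun i => max (c i).2 0, fun i => le_max_right _ _,
    hc.trans (iUnion_mono fun i => ball_subset_ball (le_max_left _ _)), ?_⟩
  refine lt_of_le_of_lt ?_ hlt
  rw [ENNReal.tsum_mul_left]
  refine mul_le_mul_right (ENNReal.tsum_le_tsum fun i => ?_) _
  dsimp only
  rcases le_total 0 (c i).2 with h0 | h0
  · rw [max_eq_left h0]
  · rw [max_eq_right h0, Real.zero_rpow hβ.ne', ENNReal.ofReal_zero]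
    exact zero_le

/-- A Vitali-type covering of the set where the density of a finite measure, relative to the
gauge `r ↦ r ^ γ`, is at least `s` on some ball. -/
lemma exists_cover_of_density_ge {γ : ℝ} (hγ : 0 < γ) (μ : Measure (Rn n)) [IsFiniteMeasure μ]
    {s : ℝ≥0∞} (hs : s ≠ 0) {A : Set (Rn n)}
    (hA : ∀ x ∈ A, ∃ r : ℝ, 0 < r ∧ s * ENNReal.ofReal (r ^ γ) ≤ μ (closedBall x (2 * r))) :
    ∃ (u : Set (Rn n)) (R : Rn n → ℝ), u.Countable ∧ A ⊆ ⋃ y : u, ball (y : Rn n) (R y) ∧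
      ∑' y : u, s * ENNReal.ofReal (R y ^ γ) ≤ ENNReal.ofReal (11 ^ γ) * μ univ := by
  choose! r hr0 hr using hA
  have hfin : μ univ / s ≠ ∞ := ENNReal.div_ne_top (measure_ne_top _ _) hs
  have hbound : ∀ x ∈ A, 2 * r x ≤ 2 * (μ univ / s).toReal ^ γ⁻¹ := by
    intro x hx
    have h1 : ENNReal.ofReal (r x ^ γ) ≤ μ univ / s := by
      rw [ENNReal.le_div_iff_mul_le (Or.inl hs) (Or.inr (measure_ne_top _ _)), mul_comm]
      exact (hr x hx).trans (measure_mono (subset_univ _))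
    have h2 : r x ^ γ ≤ (μ univ / s).toReal := (ENNReal.ofReal_le_iff_le_toReal hfin).1 h1
    have h3 : r x ≤ (μ univ / s).toReal ^ γ⁻¹ :=
      (Real.le_rpow_inv_iff_of_pos (hr0 x hx).le ENNReal.toReal_nonneg hγ).2 h2
    linarith
  obtain ⟨u, huA, hdisj, hcov⟩ := Vitali.exists_disjoint_subfamily_covering_enlargement_closedBall
    A id (fun x => 2 * r x) _ hbound 5 (by norm_num)
  have hu : u.Countable := by
    refine hdisj.countable_of_nonempty_interior fun x hx => ?_
    have hx0 := hr0 x (huA hx)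
    exact ⟨x, ball_subset_interior_closedBall (mem_ball_self (by linarith))⟩
  refine ⟨u, fun y => 11 * r y, hu, fun x hx => ?_, ?_⟩
  · obtain ⟨y, hy, hsub⟩ := hcov x hx
    have hx0 := hr0 x hx
    have hy0 := hr0 y (huA hy)
    refine mem_iUnion.2 ⟨⟨y, hy⟩, closedBall_subset_ball ?_
      (hsub (mem_closedBall_self (by linarith)))⟩
    linarith
  · have : Countable u := hu.to_subtype
    calc ∑' y : u, s * ENNReal.ofReal ((11 * r y) ^ γ)
        ≤ ∑' y : u, ENNReal.ofReal (11 ^ γ) * μ (closedBall (y : Rn n) (2 * r y)) := by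
          refine ENNReal.tsum_le_tsum fun y => ?_
          rw [Real.mul_rpow (by norm_num) (hr0 y (huA y.2)).le,
            ENNReal.ofReal_mul (by positivity), mul_left_comm]
          gcongr
          exact hr y (huA y.2)
      _ ≤ ENNReal.ofReal (11 ^ γ) * μ univ := by
          rw [ENNReal.tsum_mul_left]
          gcongr
          refine (tsum_meas_le_meas_iUnion_of_disjoint μ
            (fun y : u => (isClosed_closedBall (x := (y : Rn n)) (ε := 2 * r y)).measurableSet)
            fun y z hyz => hdisj y.2 z.2 (Subtype.coe_injective.ne hyz)).trans
            (measure_mono (subset_univ _))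


lemma ofReal_rpow_eq_rpow_div {γ : ℝ} (hγ : 0 < γ) (hγβ : γ ≤ β) {r : ℝ} (hr : 0 ≤ r) :
    ENNReal.ofReal (r ^ β) = ENNReal.ofReal (r ^ γ) ^ (β / γ) := by
  have : 0 ≤ β / γ := div_nonneg (hγ.le.trans hγβ) hγ.le
  rw [ENNReal.ofReal_rpow_of_nonneg (by positivity) this, ← Real.rpow_mul hr,
    mul_div_cancel₀ _ hγ.ne']

lemma hContent_le_rpow_tsum {γ : ℝ} (hγ : 0 < γ) (hγβ : γ ≤ β) {ι : Type*} [Countable ι]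
    {E : Set (Rn n)} (x : ι → Rn n) (r : ι → ℝ) (hr : ∀ i, 0 ≤ r i)
    (hE : E ⊆ ⋃ i, ball (x i) (r i)) :
    hContent n β E ≤ omegaC β * (∑' i, ENNReal.ofReal (r i ^ γ)) ^ (β / γ) := by
  refine (hContent_le_tsum (hγ.trans_le hγβ) x r hE).trans ?_
  gcongr
  simp only [fun i => ofReal_rpow_eq_rpow_div hγ hγβ (hr i)]
  exact ENNReal.tsum_rpow_le_rpow_tsum _ ((one_le_div hγ).2 hγβ)

open Classical in
lemma hContent_ball_inter_le {γ : ℝ} (hγ : 0 < γ) (hγβ : γ ≤ β) {E : Set (Rn n)}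
    {x : ℕ → Rn n} {r : ℕ → ℝ} (hr : ∀ j, 0 ≤ r j) (hE : E ⊆ ⋃ j, ball (x j) (r j))
    (y : Rn n) {s : ℝ} (hs : 0 < s) :
    hContent n β (ball y s ∩ E) ≤ omegaC β *
      (if y ∈ ⋃ j, ball (x j) (2 * r j) then ENNReal.ofReal (s ^ γ)
        else ∑' j, {j | x j ∈ closedBall y (2 * s)}.indicator
          (fun j => ENNReal.ofReal (r j ^ γ)) j) ^ (β / γ) := by
  split_ifs with hy
  · have h := hContent_le_rpow_tsum hγ hγβ (E := ball y s ∩ E) (fun _ : Unit => y)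
      (fun _ => s) (fun _ => hs.le) fun w hw => mem_iUnion.2 ⟨(), hw.1⟩
    simpa using h
  · rw [← tsum_subtype]
    refine hContent_le_rpow_tsum hγ hγβ
      (fun j : {j | x j ∈ closedBall y (2 * s)} => x j) (fun j => r j) (fun j => hr j) ?_
    rintro w ⟨hwy, hwE⟩
    obtain ⟨j, hj⟩ := mem_iUnion.1 (hE hwE)
    have hyj : 2 * r j ≤ dist y (x j) := by
      by_contra! hlt
      exact hy (mem_iUnion.2 ⟨j, hlt⟩)
    rw [mem_ball] at hwy hj
    have htri := dist_triangle_left y (x j) w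
    refine mem_iUnion.2 ⟨⟨j, ?_⟩, hj⟩
    change dist (x j) y ≤ 2 * s
    rw [dist_comm]
    linarith

open Classical in
/-- Points where the maximal function is large see a large weighted `γ`-dimensional mass of any
given coverings of the dyadic superlevel sets. -/
lemma exists_radius_of_lt_maximalH {γ : ℝ} (hγ : 0 < γ) (hγβ : γ < β) (g : Rn n → ℝ≥0∞)
    {x : ℤ → ℕ → Rn n} {r : ℤ → ℕ → ℝ} (hr : ∀ k j, 0 ≤ r k j)
    (hcov : ∀ k : ℤ, {y | ENNReal.ofReal (2 ^ k) < g y} ⊆ ⋃ j, ball (x k j) (r k j))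
    {t : ℝ≥0∞} {y : Rn n} (hy : t < maximalH n β g y) :
    ∃ s : ℝ, 0 < s ∧ t ^ (γ / β) * ENNReal.ofReal (s ^ γ) ≤
      ∑' k : ℤ, ENNReal.ofReal (2 ^ k) ^ (γ / β) *
        (if y ∈ ⋃ j, ball (x k j) (2 * r k j) then ENNReal.ofReal (s ^ γ)
          else ∑' j, {j | x k j ∈ closedBall y (2 * s)}.indicator
            (fun j => ENNReal.ofReal (r k j ^ γ)) j) := by
  have hβ : 0 < β := hγ.trans hγβ
  have hp : 0 < γ / β := div_pos hγ hβ
  have hq : 1 ≤ β / γ := (one_le_div hγ).2 hγβ.le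
  have hpq : γ / β * (β / γ) = 1 := by field_simp
  simp only [maximalH, lt_iSup_iff] at hy
  obtain ⟨s, hs, hlt⟩ := hy
  refine ⟨s, hs, ?_⟩
  set D : ℤ → ℝ≥0∞ := fun k =>
    if y ∈ ⋃ j, ball (x k j) (2 * r k j) then ENNReal.ofReal (s ^ γ)
      else ∑' j, {j | x k j ∈ closedBall y (2 * s)}.indicator
        (fun j => ENNReal.ofReal (r k j ^ γ)) j with hD
  have hanti : Antitone fun l : ℝ =>
      hContent n β {w | w ∈ ball y s ∧ ENNReal.ofReal l < g w} := fun l l' hll =>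
    hContent_mono fun w hw => ⟨hw.1, (ENNReal.ofReal_le_ofReal hll).trans_lt hw.2⟩
  have hint : choquetOn (hContent n β) (ball y s) g ≤
      omegaC β * (∑' k : ℤ, ENNReal.ofReal (2 ^ k) ^ (γ / β) * D k) ^ (β / γ) := by
    calc choquetOn (hContent n β) (ball y s) g
        ≤ ∑' k : ℤ, ENNReal.ofReal (2 ^ k) *
            hContent n β {w | w ∈ ball y s ∧ ENNReal.ofReal (2 ^ k) < g w} := by
          have h := lintegral_Ioi_le_tsum_zpow one_lt_two hanti
          rwa [show (2 : ℝ) - 1 = 1 by norm_num, ENNReal.ofReal_one, one_mul] at h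
      _ ≤ ∑' k : ℤ, omegaC β * (ENNReal.ofReal (2 ^ k) ^ (γ / β) * D k) ^ (β / γ) := by
          refine ENNReal.tsum_le_tsum fun k => ?_
          rw [ENNReal.mul_rpow_of_nonneg _ _ (zero_le_one.trans hq), ← ENNReal.rpow_mul, hpq,
            ENNReal.rpow_one, mul_left_comm]
          exact mul_le_mul_right (hContent_ball_inter_le hγ hγβ.le (hr k) (hcov k) y hs) _
      _ ≤ _ := by
          rw [ENNReal.tsum_mul_left]
          exact mul_le_mul_right (ENNReal.tsum_rpow_le_rpow_tsum _ hq) _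
  have hω := omegaC_ne_zero hβ
  have hω' := omegaC_ne_top β
  have hsβ : ENNReal.ofReal (s ^ β) ≠ 0 := by
    rw [ne_eq, ENNReal.ofReal_eq_zero, not_le]
    positivity
  have h1 : t * (omegaC β * ENNReal.ofReal (s ^ β)) ≤
      choquetOn (hContent n β) (ball y s) g := by
    rw [← ENNReal.le_div_iff_mul_le (Or.inl (mul_ne_zero hω hsβ))
      (Or.inl (ENNReal.mul_ne_top hω' ENNReal.ofReal_ne_top)), div_eq_mul_inv, mul_comm]
    exact hlt.le
  have h2 : t * ENNReal.ofReal (s ^ β) ≤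
      (∑' k : ℤ, ENNReal.ofReal (2 ^ k) ^ (γ / β) * D k) ^ (β / γ) := by
    refine (ENNReal.mul_le_mul_iff_right hω hω').1 ?_
    rw [mul_left_comm]
    exact h1.trans hint
  have h3 := ENNReal.rpow_le_rpow h2 hp.le
  rwa [ofReal_rpow_eq_rpow_div hγ hγβ.le hs.le, ENNReal.mul_rpow_of_nonneg _ _ hp.le,
    ← ENNReal.rpow_mul, ← ENNReal.rpow_mul, mul_comm (β / γ), hpq, ENNReal.rpow_one,
    ENNReal.rpow_one] at h3


open Classical in
lemma tsum_mul_ite_le {a : ℤ → ℝ≥0∞} {P : ℤ → Prop} {m : ℤ} (hP : ∀ k, P k → k < m)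
    (σ : ℝ≥0∞) (d : ℤ → ℝ≥0∞) :
    ∑' k, a k * (if P k then σ else d k) ≤
      (∑' k, if k < m then a k else 0) * σ + ∑' k, a k * d k := by
  rw [← ENNReal.tsum_mul_right, ← ENNReal.tsum_add]
  refine ENNReal.tsum_le_tsum fun k => ?_
  by_cases h : P k
  · rw [if_pos h, if_pos (hP k h)]
    exact le_self_add
  · rw [if_neg h]
    exact le_add_self

lemma exists_zpow_tail {b : ℝ} (hb : 1 < b) {T : ℝ≥0∞} (hT : T ≠ 0) (hT' : T ≠ ∞) :
    ∃ m : ℤ, (∑' k : ℤ, if k < m then ENNReal.ofReal (b ^ k) else 0) ≤ T ∧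
      ∀ k : ℤ, m ≤ k → ENNReal.ofReal (b - 1) * T ≤ ENNReal.ofReal b * ENNReal.ofReal (b ^ k) := by
  have hb1 : 0 < b - 1 := by linarith
  have hTr : 0 < T.toReal := ENNReal.toReal_pos hT hT'
  obtain ⟨m, hm, hm'⟩ := exists_mem_Ico_zpow (mul_pos hb1 hTr) hb
  have hmul : ENNReal.ofReal (b - 1) * T = ENNReal.ofReal ((b - 1) * T.toReal) := by
    rw [ENNReal.ofReal_mul hb1.le, ENNReal.ofReal_toReal hT']
  refine ⟨m, ?_, fun k hk => ?_⟩
  · have hb0 : ENNReal.ofReal (b - 1) ≠ 0 := by simpa using hb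
    refine (ENNReal.mul_le_mul_iff_right hb0 ENNReal.ofReal_ne_top).1 ?_
    refine (tsum_zpow_lt_le hb m).trans ?_
    rw [hmul]
    exact ENNReal.ofReal_le_ofReal hm
  · rw [hmul, ← ENNReal.ofReal_mul (by linarith)]
    refine ENNReal.ofReal_le_ofReal (hm'.le.trans ?_)
    rw [zpow_add_one₀ (by linarith), mul_comm]
    gcongr
    exact hb.le

lemma ofReal_zpow_rpow {c : ℝ} (hc : 0 < c) (p : ℝ) (k : ℤ) :
    ENNReal.ofReal (c ^ k) ^ p = ENNReal.ofReal ((c ^ p) ^ k) := by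
  rw [ENNReal.ofReal_rpow_of_pos (zpow_pos hc k), ← Real.rpow_intCast, ← Real.rpow_intCast,
    ← Real.rpow_mul hc.le, ← Real.rpow_mul hc.le, mul_comm]

lemma mul_hContent_maximalH_le_of_covers {γ : ℝ} (hγ : 0 < γ) (hγβ : γ < β) (g : Rn n → ℝ≥0∞)
    {x : ℤ → ℕ → Rn n} {r : ℤ → ℕ → ℝ} (hr : ∀ k j, 0 ≤ r k j)
    (hcov : ∀ k : ℤ, {y | ENNReal.ofReal (2 ^ k) < g y} ⊆ ⋃ j, ball (x k j) (r k j))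
    {b : ℝ} (hb : b = 2 ^ (γ / β)) {S : ℝ≥0∞}
    (hS : S = ∑' k : ℤ, ENNReal.ofReal (b ^ k) * ∑' j, ENNReal.ofReal (r k j ^ γ))
    (hS' : S ≠ ∞) {t : ℝ≥0∞} (ht : t ≠ 0) (ht' : t ≠ ∞) :
    ENNReal.ofReal (b - 1) * (t ^ (γ / β) / 2 * hContent n γ {y | t < maximalH n β g y}) ≤
      ENNReal.ofReal (b * 2 ^ γ + (b - 1) * 11 ^ γ) * (omegaC γ * S) := by
  classical
  have hp : 0 < γ / β := div_pos hγ (hγ.trans hγβ)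
  have hb1 : 1 < b := hb ▸ Real.one_lt_rpow one_lt_two hp
  set T : ℝ≥0∞ := t ^ (γ / β) / 2 with hT
  have htp : t ^ (γ / β) ≠ ∞ := ENNReal.rpow_ne_top_of_nonneg hp.le ht'
  have hT0 : T ≠ 0 := by
    rw [hT, ne_eq, ENNReal.div_eq_zero_iff, not_or]
    exact ⟨by simp [ENNReal.rpow_eq_zero_iff, ht, ht'], by simp⟩
  have hTtop : T ≠ ∞ := ENNReal.div_ne_top htp (by simp)
  obtain ⟨m, hm, hm'⟩ := exists_zpow_tail hb1 hT0 hTtop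
  set w : ℤ × ℕ → ℝ≥0∞ := fun i =>
    ENNReal.ofReal (b ^ i.1) * ENNReal.ofReal (r i.1 i.2 ^ γ) with hw
  have hwS : ∑' i, w i = S := by
    rw [hS, ENNReal.tsum_prod (f := fun k j =>
      ENNReal.ofReal (b ^ k) * ENNReal.ofReal (r k j ^ γ))]
    simp only [ENNReal.tsum_mul_left]
  set μ : Measure (Rn n) := Measure.sum fun i : ℤ × ℕ => w i • Measure.dirac (x i.1 i.2) with hμ
  have hμu : μ univ = S := by
    rw [hμ, Measure.sum_apply _ MeasurableSet.univ, ← hwS]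
    simp
  have : IsFiniteMeasure μ := ⟨by rw [hμu]; exact hS'.lt_top⟩
  have hμB (y : Rn n) (ρ : ℝ) : μ (closedBall y ρ) = ∑' k : ℤ, ENNReal.ofReal (b ^ k) *
      ∑' j, {j | x k j ∈ closedBall y ρ}.indicator (fun j => ENNReal.ofReal (r k j ^ γ)) j := by
    rw [hμ, Measure.sum_apply _ isClosed_closedBall.measurableSet]
    simp only [← ENNReal.tsum_mul_left]
    rw [← ENNReal.tsum_prod (f := fun k j => ENNReal.ofReal (b ^ k) *
      {j | x k j ∈ closedBall y ρ}.indicator (fun j => ENNReal.ofReal (r k j ^ γ)) j)]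
    refine tsum_congr fun i => ?_
    rw [Measure.smul_apply, Measure.dirac_apply' _ isClosed_closedBall.measurableSet, smul_eq_mul]
    by_cases h : x i.1 i.2 ∈ closedBall y ρ
    · rw [indicator_of_mem h,
        indicator_of_mem (show i.2 ∈ {j | x i.1 j ∈ closedBall y ρ} from h), Pi.one_apply, mul_one]
    · rw [indicator_of_notMem h,
        indicator_of_notMem (show i.2 ∉ {j | x i.1 j ∈ closedBall y ρ} from h), mul_zero,
        mul_zero]
  set I : Set (ℤ × ℕ) := {i | m ≤ i.1}
  set U : Set (Rn n) := ⋃ i : I, ball (x i.1.1 i.1.2) (2 * r i.1.1 i.1.2) with hU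
  obtain ⟨u, R, hu, hcovu, hsum⟩ := exists_cover_of_density_ge hγ μ hT0
    (A := {y | t < maximalH n β g y} \ U) (by
      rintro y ⟨hy, hyU⟩
      obtain ⟨s, hs, hle⟩ := exists_radius_of_lt_maximalH hγ hγβ g hr hcov hy
      refine ⟨s, hs, ?_⟩
      simp only [ofReal_zpow_rpow two_pos, ← hb] at hle
      have hlt (k : ℤ) (hk : y ∈ ⋃ j, ball (x k j) (2 * r k j)) : k < m := by
        by_contra! hmk
        obtain ⟨j, hj⟩ := mem_iUnion.1 hk
        exact hyU (mem_iUnion.2 ⟨⟨(k, j), hmk⟩, hj⟩)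
      have h := hle.trans (tsum_mul_ite_le hlt _ _)
      rw [← hμB, ← ENNReal.add_halves (t ^ (γ / β)), ← hT, add_mul] at h
      have hfin : T * ENNReal.ofReal (s ^ γ) ≠ ∞ := ENNReal.mul_ne_top hTtop ENNReal.ofReal_ne_top
      exact (ENNReal.add_le_add_iff_left hfin).1 (h.trans (by gcongr)))
  have : Countable u := hu.to_subtype
  have hcontent : hContent n γ {y | t < maximalH n β g y} ≤ omegaC γ *
      (∑' i : I, ENNReal.ofReal ((2 * r i.1.1 i.1.2) ^ γ) +
        ∑' y : u, ENNReal.ofReal (R y ^ γ)) := by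
    have h := hContent_le_tsum hγ (E := {y | t < maximalH n β g y})
      (Sum.elim (fun i : I => x i.1.1 i.1.2) (fun y : u => (y : Rn n)))
      (Sum.elim (fun i : I => 2 * r i.1.1 i.1.2) (fun y : u => R y)) (by
        intro y hy
        rw [iUnion_sum]
        by_cases hyU : y ∈ U
        · exact Or.inl hyU
        · exact Or.inr (hcovu ⟨hy, hyU⟩))
    rwa [ENNReal.summable.tsum_sum ENNReal.summable] at h
  have h1 : ENNReal.ofReal (b - 1) * (T * ∑' i : I, ENNReal.ofReal ((2 * r i.1.1 i.1.2) ^ γ)) ≤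
      ENNReal.ofReal (b * 2 ^ γ) * S := by
    calc _ = ∑' i : I, (ENNReal.ofReal (b - 1) * T) * ENNReal.ofReal ((2 * r i.1.1 i.1.2) ^ γ) := by
          rw [← mul_assoc, ENNReal.tsum_mul_left]
      _ ≤ ∑' i : I, ENNReal.ofReal (b * 2 ^ γ) * w i := by
          refine ENNReal.tsum_le_tsum fun i => ?_
          refine (mul_le_mul_left (hm' _ i.2) _).trans_eq ?_
          rw [Real.mul_rpow two_pos.le (hr _ _), ENNReal.ofReal_mul (by positivity),
            ENNReal.ofReal_mul (by linarith)]
          ring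
      _ ≤ ENNReal.ofReal (b * 2 ^ γ) * S := by
          rw [ENNReal.tsum_mul_left, ← hwS]
          exact mul_le_mul_right (ENNReal.tsum_comp_le_tsum_of_injective
            Subtype.val_injective w) _
  have h2 : ENNReal.ofReal (b - 1) * (T * ∑' y : u, ENNReal.ofReal (R y ^ γ)) ≤
      ENNReal.ofReal ((b - 1) * 11 ^ γ) * S := by
    rw [ENNReal.tsum_mul_left, hμu] at hsum
    rw [ENNReal.ofReal_mul (by linarith), mul_assoc]
    exact mul_le_mul_right hsum _
  have hb0 : 0 < b - 1 := by linarith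
  calc _ ≤ ENNReal.ofReal (b - 1) * (T * (omegaC γ *
        (∑' i : I, ENNReal.ofReal ((2 * r i.1.1 i.1.2) ^ γ) +
          ∑' y : u, ENNReal.ofReal (R y ^ γ)))) := by gcongr
    _ = omegaC γ *
        (ENNReal.ofReal (b - 1) * (T * ∑' i : I, ENNReal.ofReal ((2 * r i.1.1 i.1.2) ^ γ)) +
          ENNReal.ofReal (b - 1) * (T * ∑' y : u, ENNReal.ofReal (R y ^ γ))) := by ring
    _ ≤ omegaC γ * (ENNReal.ofReal (b * 2 ^ γ) * S + ENNReal.ofReal ((b - 1) * 11 ^ γ) * S) := by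
        gcongr
    _ = _ := by
        rw [ENNReal.ofReal_add (by positivity) (by positivity)]
        ring

/-- Near-optimal coverings of countably many sets, with prescribed weights. -/
lemma exists_covers_of_tsum_hContent_lt {γ : ℝ} (hγ : 0 < γ) {E : ℤ → Set (Rn n)}
    {a : ℤ → ℝ≥0∞} (ha : ∀ k, a k ≠ 0) (ha' : ∀ k, a k ≠ ∞) {A : ℝ≥0∞}
    (hA : ∑' k, a k * hContent n γ (E k) < A) :
    ∃ (x : ℤ → ℕ → Rn n) (r : ℤ → ℕ → ℝ), (∀ k j, 0 ≤ r k j) ∧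
      (∀ k, E k ⊆ ⋃ j, ball (x k j) (r k j)) ∧
      omegaC γ * ∑' k, a k * ∑' j, ENNReal.ofReal (r k j ^ γ) ≤ A := by
  obtain ⟨δ, hδ, hδA⟩ := ENNReal.exists_pos_sum_of_countable' (tsub_pos_of_lt hA).ne' ℤ
  have hlt (k : ℤ) : hContent n γ (E k) < hContent n γ (E k) + δ k / a k := by
    refine ENNReal.lt_add_right (fun htop => ?_) (ENNReal.div_pos (hδ k).ne' (ha' k)).ne'
    have := (ENNReal.le_tsum (f := fun k => a k * hContent n γ (E k)) k).trans_lt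
      (hA.trans_le le_top)
    simp only [htop, ENNReal.mul_top (ha k)] at this
    exact this.ne rfl
  choose x r hr hcov hlt' using fun k => exists_cover_of_hContent_lt hγ (hlt k)
  refine ⟨x, r, hr, hcov, ?_⟩
  calc omegaC γ * ∑' k, a k * ∑' j, ENNReal.ofReal (r k j ^ γ)
      = ∑' k, a k * (omegaC γ * ∑' j, ENNReal.ofReal (r k j ^ γ)) := by
        rw [← ENNReal.tsum_mul_left]
        simp only [mul_left_comm]
    _ ≤ ∑' k, (a k * hContent n γ (E k) + δ k) := by
        refine ENNReal.tsum_le_tsum fun k => (mul_le_mul_right (hlt' k).le _).trans_eq ?_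
        rw [mul_add, ENNReal.mul_div_cancel (ha k) (ha' k)]
    _ ≤ A := by
        rw [ENNReal.tsum_add]
        exact (add_le_add_right hδA.le _).trans_eq (add_tsub_cancel_of_le hA.le)

lemma tsum_zpow_hContent_le_choquet {p : ℝ} (hp : 0 < p) {γ : ℝ} (g : Rn n → ℝ≥0∞) {b : ℝ}
    (hb : b = 2 ^ p) :
    ENNReal.ofReal (b - 1) *
        ∑' k : ℤ, ENNReal.ofReal (b ^ k) * hContent n γ {y | ENNReal.ofReal (2 ^ k) < g y} ≤
      ENNReal.ofReal b * choquet (hContent n γ) (fun y => g y ^ p) := by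
  have hb1 : 1 < b := hb ▸ Real.one_lt_rpow one_lt_two hp
  have hanti : Antitone fun l : ℝ => hContent n γ {y | ENNReal.ofReal l < g y ^ p} :=
    fun l l' hll => hContent_mono fun w hw => (ENNReal.ofReal_le_ofReal hll).trans_lt hw
  have h := tsum_zpow_mul_le_lintegral_Ioi hb1 hanti
  refine le_trans (le_of_eq ?_) h
  congr 1
  refine tsum_congr fun k => ?_
  congr 3
  ext y
  rw [hb, ← ofReal_zpow_rpow two_pos, ENNReal.rpow_lt_rpow_iff hp]

lemma mul_hContent_maximalH_le_tsum {γ : ℝ} (hγ : 0 < γ) (hγβ : γ < β) (g : Rn n → ℝ≥0∞)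
    {b : ℝ} (hb : b = 2 ^ (γ / β)) {t : ℝ≥0∞} (ht : t ≠ 0) (ht' : t ≠ ∞) :
    ENNReal.ofReal (b - 1) * (t ^ (γ / β) / 2 * hContent n γ {y | t < maximalH n β g y}) ≤
      ENNReal.ofReal (b * 2 ^ γ + (b - 1) * 11 ^ γ) *
        ∑' k : ℤ, ENNReal.ofReal (b ^ k) * hContent n γ {y | ENNReal.ofReal (2 ^ k) < g y} := by
  have hb1 : 1 < b := hb ▸ Real.one_lt_rpow one_lt_two (div_pos hγ (hγ.trans hγβ))
  have hK : ENNReal.ofReal (b * 2 ^ γ + (b - 1) * 11 ^ γ) ≠ 0 := by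
    rw [ne_eq, ENNReal.ofReal_eq_zero, not_le]
    have : 0 < b - 1 := by linarith
    positivity
  rw [mul_comm (ENNReal.ofReal (b * 2 ^ γ + (b - 1) * 11 ^ γ)),
    ← ENNReal.div_le_iff hK ENNReal.ofReal_ne_top]
  refine le_of_forall_gt_imp_ge_of_dense fun A hA => ?_
  rcases eq_or_ne A ∞ with rfl | hAtop
  · exact le_top
  obtain ⟨x, r, hr, hcov, hS⟩ := exists_covers_of_tsum_hContent_lt hγ
    (fun k => by simpa using zpow_pos (by linarith) k) (fun k => ENNReal.ofReal_ne_top) hA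
  have hSfin : ∑' k : ℤ, ENNReal.ofReal (b ^ k) * ∑' j, ENNReal.ofReal (r k j ^ γ) ≠ ∞ := by
    intro h
    rw [h, ENNReal.mul_top (omegaC_ne_zero hγ)] at hS
    exact hAtop (top_le_iff.1 hS)
  rw [ENNReal.div_le_iff hK ENNReal.ofReal_ne_top, mul_comm A]
  exact (mul_hContent_maximalH_le_of_covers hγ hγβ g hr hcov hb rfl hSfin ht ht').trans
    (mul_le_mul_right hS _)

end Content

/-- Weak-type endpoint bound with `p = γ/β < 1`:
`H^γ_∞({M_{H^β_∞} f > t}) ≤ (C/t^p) ∫ |f|^p dH^γ_∞` for `f ∈ L^p(H^γ_∞)`. -/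
theorem statement9 (n : ℕ) (γ β : ℝ) (hγ : 0 < γ) (hγβ : γ < β) (hβn : β ≤ n) :
    ∃ C : ℝ, 0 < C ∧ ∀ f : Rn n → ℝ, MemChoquetLp (hContent n γ) (γ / β) f →
      ∀ t : ℝ, 0 < t →
        hContent n γ {x | ENNReal.ofReal t < maximalH n β (fun y => ENNReal.ofReal |f y|) x} ≤
          (ENNReal.ofReal C / ENNReal.ofReal t ^ (γ / β)) *
            choquet (hContent n γ) (fun x => ENNReal.ofReal |f x| ^ (γ / β)) := by
  have hp : 0 < γ / β := div_pos hγ (hγ.trans hγβ)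
  obtain ⟨b, hb⟩ : ∃ b : ℝ, b = 2 ^ (γ / β) := ⟨_, rfl⟩
  have hb1 : 0 < b - 1 := sub_pos.2 (hb ▸ Real.one_lt_rpow one_lt_two hp)
  have hb0 : 0 < b := by linarith
  refine ⟨(b * 2 ^ γ + (b - 1) * 11 ^ γ) * b * 2 / (b - 1) ^ 2, by positivity,
    fun f _ t ht => ?_⟩
  have ht0 : ENNReal.ofReal t ≠ 0 := by simpa using ht
  have h1 := mul_hContent_maximalH_le_tsum hγ hγβ (fun y : Rn n => ENNReal.ofReal |f y|) hb
    ht0 ENNReal.ofReal_ne_top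
  have h2 := tsum_zpow_hContent_le_choquet hp (γ := γ) (fun y : Rn n => ENNReal.ofReal |f y|) hb
  set H := hContent n γ {x | ENNReal.ofReal t < maximalH n β (fun y => ENNReal.ofReal |f y|) x}
  set J := choquet (hContent n γ) (fun x => ENNReal.ofReal |f x| ^ (γ / β))
  set K : ℝ := b * 2 ^ γ + (b - 1) * 11 ^ γ with hK
  have hK0 : 0 < K := by positivity
  set τ := ENNReal.ofReal t ^ (γ / β) with hτ
  have hτ0 : τ ≠ 0 := by simp [hτ, ENNReal.rpow_eq_zero_iff, ht, hp]
  have hτtop : τ ≠ ∞ := ENNReal.rpow_ne_top_of_nonneg hp.le ENNReal.ofReal_ne_top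
  have hd : ENNReal.ofReal ((b - 1) ^ 2) ≠ 0 := by
    rw [ne_eq, ENNReal.ofReal_eq_zero, not_le]
    positivity
  rw [ENNReal.mul_comm_div, ← mul_div_assoc, ENNReal.le_div_iff_mul_le (Or.inl hτ0)
    (Or.inl hτtop), ENNReal.ofReal_div_of_pos (by positivity)]
  rw [ENNReal.mul_comm_div, ← mul_div_assoc,
    ENNReal.le_div_iff_mul_le (Or.inl hd) (Or.inl ENNReal.ofReal_ne_top)]
  calc H * τ * ENNReal.ofReal ((b - 1) ^ 2)
      = ENNReal.ofReal 2 * (ENNReal.ofReal (b - 1) * (ENNReal.ofReal (b - 1) * (τ / 2 * H))) := by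
        rw [pow_two, ENNReal.ofReal_mul hb1.le, ENNReal.ofReal_ofNat]
        nth_rewrite 1 [← ENNReal.mul_div_cancel (a := 2) (b := τ) (by simp) (by simp)]
        ring
    _ ≤ ENNReal.ofReal 2 * (ENNReal.ofReal (b - 1) * (ENNReal.ofReal K * _)) := by gcongr
    _ ≤ ENNReal.ofReal 2 * (ENNReal.ofReal K * (ENNReal.ofReal b * J)) := by
        rw [mul_left_comm (ENNReal.ofReal (b - 1))]
        gcongr
    _ = ENNReal.ofReal (K * b * 2) * J := by
        rw [ENNReal.ofReal_mul (by positivity), ENNReal.ofReal_mul hK0.le]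
        ring

end
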